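/- Suppose each c_j is strictly increasing on T_j (regularity), and let (p*, x*) be the optimal mechanism: p* : T → ℝ^m is a measurable allocation such that at every t ∈ T, if max_i W_i(t) > 0 then p*_k(t) = 1 for some maximizer k of i ↦ W_i(t) and p*_i(t) = 0 for i ≠ k, while otherwise p*(t) = 0; and x*_j(t) = θ t_j ∑_{i∈S_j} p*_i(t) − θ ∫_{a_j}^{t_j} ∑_{i∈S_j} p*_i(τ, t_{−j}) dτ. Then (p*, x*) satisfies FF, IC and IR, and for every mechanism (p, x) with p, x measurable, each x_j integrable, and satisfying FF, IC and IR, one has ER(p, x) ≤ ER(p*, x*). (Theorem 1: revenue optimality of the proposed auction.) -/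

import Mathlib

open MeasureTheory Finset

noncomputable section Caching

/-- The joint type space T = ∏_j [a_j, ā_j]. -/
def Tspace {n : ℕ} (a abar : Fin n → ℝ) : Set (Fin n → ℝ) :=
  Set.univ.pi fun j => Set.Icc (a j) (abar j)

/-- The joint density f(t) = ∏_j f_j(t_j). -/
def jointDens {n : ℕ} (f : Fin n → ℝ → ℝ) (t : Fin n → ℝ) : ℝ :=
  ∏ j, f j (t j)

/-- Interim allocation p̃_j(τ) = ∫_{T_{−j}} (∑_{i∈S_j} p_i(τ, t_{−j})) f_{−j}(t_{−j}) dt_{−j},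
written as an integral over the whole type space against the joint density
(the coordinate j integrates out since f_j is a probability density). -/
def interimAlloc {n m : ℕ} (a abar : Fin n → ℝ) (f : Fin n → ℝ → ℝ)
    (S : Fin n → Finset (Fin m)) (p : (Fin n → ℝ) → Fin m → ℝ)
    (j : Fin n) (τ : ℝ) : ℝ :=
  ∫ t in Tspace a abar, (∑ i ∈ S j, p (Function.update t j τ) i) * jointDens f t

/-- Interim payment x̃_j(τ) = ∫_{T_{−j}} x_j(τ, t_{−j}) f_{−j}(t_{−j}) dt_{−j}. -/
def interimPay {n : ℕ} (a abar : Fin n → ℝ) (f : Fin n → ℝ → ℝ)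
    (x : (Fin n → ℝ) → Fin n → ℝ) (j : Fin n) (τ : ℝ) : ℝ :=
  ∫ t in Tspace a abar, x (Function.update t j τ) j * jointDens f t

/-- Truthful interim utility ṽ_j(t) = θ t p̃_j(t) − x̃_j(t). -/
def vtld {n m : ℕ} (θ : ℝ) (a abar : Fin n → ℝ) (f : Fin n → ℝ → ℝ)
    (S : Fin n → Finset (Fin m)) (p : (Fin n → ℝ) → Fin m → ℝ)
    (x : (Fin n → ℝ) → Fin n → ℝ) (j : Fin n) (t : ℝ) : ℝ :=
  θ * t * interimAlloc a abar f S p j t - interimPay a abar f x j t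

/-- The virtual valuation c_j(t) = t − (1 − F_j(t))/f_j(t). -/
def virtVal {n : ℕ} (a : Fin n → ℝ) (f : Fin n → ℝ → ℝ) (j : Fin n) (t : ℝ) : ℝ :=
  t - (1 - ∫ τ in (a j)..t, f j τ) / f j t

/-- The virtual welfare of content i at type profile t:
W_i(t) = ∑_{s ∈ Ω_i} (θ c_s(t_s) − h(θ)) − r_i, where Ω_i = {j : i ∈ S_j}. -/
def virtWelfare {n m : ℕ} (θ hval : ℝ) (r : Fin m → ℝ)
    (S : Fin n → Finset (Fin m)) (c : Fin n → ℝ → ℝ)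
    (i : Fin m) (t : Fin n → ℝ) : ℝ :=
  (∑ s ∈ Finset.univ.filter fun j => i ∈ S j, (θ * c s (t s) - hval)) - r i

/-- The payment rule x*_j(t) = θ t_j ∑_{i∈S_j} p_i(t)
− θ ∫_{a_j}^{t_j} ∑_{i∈S_j} p_i(τ, t_{−j}) dτ. -/
def xstar {n m : ℕ} (θ : ℝ) (a : Fin n → ℝ) (S : Fin n → Finset (Fin m))
    (p : (Fin n → ℝ) → Fin m → ℝ) (t : Fin n → ℝ) (j : Fin n) : ℝ :=
  θ * t j * (∑ i ∈ S j, p t i)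
    - θ * ∫ τ in (a j)..(t j), ∑ i ∈ S j, p (Function.update t j τ) i

/-- Expected revenue
ER(p, x) = ∫_T [ ∑_j x_j(t) − ∑_i p_i(t) r_i − ∑_i p_i(t) |Ω_i| h(θ) ] f(t) dt. -/
def expRev {n m : ℕ} (hval : ℝ) (r : Fin m → ℝ) (a abar : Fin n → ℝ)
    (f : Fin n → ℝ → ℝ) (S : Fin n → Finset (Fin m))
    (p : (Fin n → ℝ) → Fin m → ℝ) (x : (Fin n → ℝ) → Fin n → ℝ) : ℝ :=
  ∫ t in Tspace a abar,
    (∑ j, x t j - ∑ i, p t i * r i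
      - ∑ i, p t i * ((Finset.univ.filter fun j => i ∈ S j).card : ℝ) * hval)
      * jointDens f t

/-- Incentive compatibility of a mechanism (p, x). -/
def IC {n m : ℕ} (θ : ℝ) (a abar : Fin n → ℝ) (f : Fin n → ℝ → ℝ)
    (S : Fin n → Finset (Fin m)) (p : (Fin n → ℝ) → Fin m → ℝ)
    (x : (Fin n → ℝ) → Fin n → ℝ) : Prop :=
  ∀ j, ∀ τ ∈ Set.Icc (a j) (abar j), ∀ t ∈ Set.Icc (a j) (abar j),
    θ * t * interimAlloc a abar f S p j τ - interimPay a abar f x j τ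
      ≤ vtld θ a abar f S p x j t

/-- Individual rationality of a mechanism (p, x). -/
def IR {n m : ℕ} (θ : ℝ) (a abar : Fin n → ℝ) (f : Fin n → ℝ → ℝ)
    (S : Fin n → Finset (Fin m)) (p : (Fin n → ℝ) → Fin m → ℝ)
    (x : (Fin n → ℝ) → Fin n → ℝ) : Prop :=
  ∀ j, ∀ t ∈ Set.Icc (a j) (abar j), 0 ≤ vtld θ a abar f S p x j t

/-!
Incentive compatibility says that `θ p̃_j` selects subgradients of the truthful interim utility
`ṽ_j`. Two functions with a common subgradient selection on an interval differ by a constant, so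
`ṽ_j(t) = ṽ_j(a_j) + ∫ θ p̃_j` over `[a_j, t]`. Exchanging the order of integration then turns the
expected payment of user `j` into the expected virtual surplus minus `ṽ_j(a_j)`, whence
`ER(p, x) = E[∑ i, p_i W_i] - ∑ j, ṽ_j(a_j)` for every incentive compatible mechanism. Individual
rationality makes the last sum nonnegative, and `p*` maximizes the first integrand pointwise. The
payments `x*` make `ṽ_j(a_j) = 0`; regularity makes `p̃*_j` monotone, hence `θ p̃*_j` a subgradient
selection of its own primitive, which is the utility under `x*`.
-/

section ProductMeasure

variable {ι : Type*} [Fintype ι] {X : ι → Type*} [∀ i, MeasurableSpace (X i)]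
  {α : Type*} [MeasurableSpace α]

lemma integral_withDensity_ofReal {μ : Measure α} {g : α → ℝ} (hg : AEMeasurable g μ)
    (hg0 : 0 ≤ᵐ[μ] g) (G : α → ℝ) :
    ∫ t, G t ∂μ.withDensity (fun t => ENNReal.ofReal (g t)) = ∫ t, G t * g t ∂μ := by
  rw [integral_withDensity_eq_integral_toReal_smul₀ hg.ennreal_ofReal (by simp)]
  refine integral_congr_ae ?_
  filter_upwards [hg0] with t ht
  rw [ENNReal.toReal_ofReal ht, smul_eq_mul, mul_comm]

lemma integrable_withDensity_ofReal_iff {μ : Measure α} {g : α → ℝ} (hg : AEMeasurable g μ)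
    (hg0 : 0 ≤ᵐ[μ] g) {G : α → ℝ} :
    Integrable G (μ.withDensity fun t => ENNReal.ofReal (g t))
      ↔ Integrable (fun t => G t * g t) μ := by
  rw [integrable_withDensity_iff_integrable_smul₀' hg.ennreal_ofReal (by simp)]
  refine integrable_congr ?_
  filter_upwards [hg0] with t ht
  rw [ENNReal.toReal_ofReal ht, smul_eq_mul, mul_comm]

lemma withDensity_ofReal_apply {μ : Measure α} {g : α → ℝ} (hg : Integrable g μ)
    (hg0 : 0 ≤ᵐ[μ] g) {s : Set α} (hs : MeasurableSet s) :
    μ.withDensity (fun t => ENNReal.ofReal (g t)) s = ENNReal.ofReal (∫ t in s, g t ∂μ) := by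
  rw [withDensity_apply _ hs,
    ofReal_integral_eq_lintegral_ofReal hg.restrict (ae_restrict_of_ae hg0)]

lemma ae_pi_prod_nonneg {μ : ∀ i, Measure (X i)} [∀ i, SigmaFinite (μ i)]
    {g : ∀ i, X i → ℝ} (hg0 : ∀ i, 0 ≤ᵐ[μ i] g i) :
    0 ≤ᵐ[Measure.pi μ] fun t => ∏ i, g i (t i) := by
  have hcoord : ∀ᵐ t ∂Measure.pi μ, ∀ i, 0 ≤ g i (t i) :=
    ae_all_iff.2 fun i => (Measure.quasiMeasurePreserving_eval μ i).ae (hg0 i)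
  filter_upwards [hcoord] with t ht using Finset.prod_nonneg fun i _ => ht i

lemma pi_withDensity_ofReal {μ : ∀ i, Measure (X i)} [∀ i, SigmaFinite (μ i)]
    {g : ∀ i, X i → ℝ} (hg : ∀ i, Integrable (g i) (μ i)) (hg0 : ∀ i, 0 ≤ᵐ[μ i] g i) :
    Measure.pi (fun i => (μ i).withDensity fun t => ENNReal.ofReal (g i t))
      = (Measure.pi μ).withDensity fun t => ENNReal.ofReal (∏ i, g i (t i)) := by
  have := fun i => isFiniteMeasure_withDensity_ofReal (hg i).2
  refine Measure.pi_eq fun s hs => ?_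
  rw [withDensity_ofReal_apply (Integrable.fintype_prod_dep hg) (ae_pi_prod_nonneg hg0)
      (MeasurableSet.univ_pi hs),
    Measure.restrict_pi_pi, integral_fintype_prod_eq_prod,
    ENNReal.ofReal_prod_of_nonneg fun i _ => integral_nonneg_of_ae (ae_restrict_of_ae (hg0 i))]
  exact Finset.prod_congr rfl fun i _ => (withDensity_ofReal_apply (hg i) (hg0 i) (hs i)).symm

variable [DecidableEq ι]

lemma measurePreserving_update_pi (μ : ∀ i, Measure (X i)) [∀ i, IsProbabilityMeasure (μ i)]
    (j : ι) :
    MeasurePreserving (fun z : (∀ i, X i) × X j => Function.update z.1 j z.2)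
      ((Measure.pi μ).prod (μ j)) (Measure.pi μ) := by
  refine ⟨measurable_update', (Measure.pi_eq fun s hs => ?_).symm⟩
  have hpreimage : (fun z : (∀ i, X i) × X j => Function.update z.1 j z.2) ⁻¹' Set.univ.pi s
      = Set.pi (univ.erase j : Finset ι) s ×ˢ s j := by
    ext z
    simp only [Set.mem_preimage, Set.update_mem_pi_iff, Set.mem_univ, forall_const,
      Set.mem_prod, Finset.coe_erase, Finset.coe_univ]
  rw [Measure.map_apply measurable_update' (MeasurableSet.univ_pi hs), hpreimage,
    Measure.prod_prod, Measure.pi_pi_finset, Finset.prod_erase_mul _ _ (Finset.mem_univ j)]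

lemma integral_integral_update {μ : ∀ i, Measure (X i)} [∀ i, IsProbabilityMeasure (μ i)]
    (j : ι) {G : (∀ i, X i) → ℝ} (hG : Integrable G (Measure.pi μ)) :
    ∫ τ, ∫ t, G (Function.update t j τ) ∂Measure.pi μ ∂μ j = ∫ t, G t ∂Measure.pi μ := by
  have hupdate := measurePreserving_update_pi μ j
  calc ∫ τ, ∫ t, G (Function.update t j τ) ∂Measure.pi μ ∂μ j
      = ∫ z, G (Function.update z.1 j z.2) ∂(Measure.pi μ).prod (μ j) :=
        (integral_prod_symm _ (hupdate.integrable_comp_of_integrable hG)).symm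
    _ = ∫ t, G t ∂(((Measure.pi μ).prod (μ j)).map fun z => Function.update z.1 j z.2) :=
        (integral_map hupdate.aemeasurable
          (hupdate.map_eq.symm ▸ hG.aestronglyMeasurable)).symm
    _ = ∫ t, G t ∂Measure.pi μ := by rw [hupdate.map_eq]

end ProductMeasure

section Primitive

variable {a b : ℝ}

lemma intervalIntegral_eq_setIntegral_indicator_Iic {t : ℝ} (ht : t ∈ Set.Icc a b)
    (P : ℝ → ℝ) :
    ∫ s in a..t, P s = ∫ s in Set.Icc a b, (Set.Iic t).indicator P s := by
  rw [setIntegral_indicator measurableSet_Iic, intervalIntegral.integral_of_le ht.1,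
    ← integral_Icc_eq_integral_Ioc, ← Set.Ici_inter_Iic, ← Set.Ici_inter_Iic, Set.inter_assoc,
    Set.Iic_inter_Iic, min_eq_right ht.2]

lemma intervalIntegral_eq_setIntegral_indicator_Ici {s : ℝ} (hs : s ∈ Set.Icc a b)
    (g : ℝ → ℝ) :
    ∫ t in s..b, g t = ∫ t in Set.Icc a b, (Set.Ici s).indicator g t := by
  rw [setIntegral_indicator measurableSet_Ici, intervalIntegral.integral_of_le hs.2,
    ← integral_Icc_eq_integral_Ioc, ← Set.Ici_inter_Iic, ← Set.Ici_inter_Iic,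
    Set.inter_right_comm, Set.Ici_inter_Ici, max_eq_right hs.1]

lemma continuousOn_intervalIntegral_right {g : ℝ → ℝ} (hg : IntegrableOn g (Set.Icc a b)) :
    ContinuousOn (fun t => ∫ s in a..t, g s) (Set.Icc a b) :=
  (intervalIntegral.continuousOn_primitive_Icc hg).congr fun t ht => by
    simp only [integral_Icc_eq_integral_Ioc, intervalIntegral.integral_of_le ht.1]

lemma setIntegral_primitive_mul {P g : ℝ → ℝ} (hP : IntegrableOn P (Set.Icc a b))
    (hg : IntegrableOn g (Set.Icc a b)) :
    ∫ t in Set.Icc a b, (∫ s in a..t, P s) * g t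
      = ∫ s in Set.Icc a b, P s * ∫ t in s..b, g t := by
  let D : Set (ℝ × ℝ) := {z | z.2 ≤ z.1}
  have hD : MeasurableSet D := measurableSet_le measurable_snd measurable_fst
  have hK : Integrable (D.indicator fun z => g z.1 * P z.2)
      ((volume.restrict (Set.Icc a b)).prod (volume.restrict (Set.Icc a b))) :=
    (Integrable.mul_prod hg hP).indicator hD
  calc ∫ t in Set.Icc a b, (∫ s in a..t, P s) * g t
      = ∫ t in Set.Icc a b, ∫ s in Set.Icc a b, D.indicator (fun z => g z.1 * P z.2) (t, s) := by
        refine setIntegral_congr_fun measurableSet_Icc fun t ht => ?_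
        simp only [intervalIntegral_eq_setIntegral_indicator_Iic ht, ← integral_mul_const]
        congr 1 with s
        by_cases h : s ≤ t <;> simp [D, h, mul_comm]
    _ = ∫ s in Set.Icc a b, ∫ t in Set.Icc a b, D.indicator (fun z => g z.1 * P z.2) (t, s) :=
        integral_integral_swap hK
    _ = ∫ s in Set.Icc a b, P s * ∫ t in s..b, g t := by
        refine setIntegral_congr_fun measurableSet_Icc fun s hs => ?_
        simp only [intervalIntegral_eq_setIntegral_indicator_Ici hs, ← integral_const_mul]
        congr 1 with t
        by_cases h : s ≤ t <;> simp [D, h, mul_comm]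

lemma integrable_intervalIntegral_of_mem_Icc {α : Type*} [MeasurableSpace α] {μ : Measure α}
    [SFinite μ] {H : α × ℝ → ℝ} (hH : Integrable H (μ.prod (volume.restrict (Set.Icc a b))))
    {u : α → ℝ} (hu : Measurable u) (humem : ∀ᵐ t ∂μ, u t ∈ Set.Icc a b) :
    Integrable (fun t => ∫ s in a..u t, H (t, s)) μ := by
  have hD : MeasurableSet {z : α × ℝ | z.2 ≤ u z.1} :=
    measurableSet_le measurable_snd (hu.comp measurable_fst)
  refine (hH.indicator hD).integral_prod_left.congr ?_
  filter_upwards [humem] with t ht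
  rw [intervalIntegral_eq_setIntegral_indicator_Iic ht]
  rfl

end Primitive

section Subgradient

/-- `q` selects a subgradient of `V` at every point of `K`. Incentive compatibility says exactly
that the interim allocation, scaled by `θ`, is such a selection for the truthful utility. -/
def IsSubgradientOn (q V : ℝ → ℝ) (K : Set ℝ) : Prop :=
  ∀ s ∈ K, ∀ t ∈ K, V s + (t - s) * q s ≤ V t

namespace IsSubgradientOn

variable {q U V : ℝ → ℝ} {K : Set ℝ}

lemma monotoneOn (hV : IsSubgradientOn q V K) : MonotoneOn q K := by
  intro s hs t ht hst
  rcases hst.eq_or_lt with rfl | hlt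
  · rfl
  · have h : 0 ≤ (t - s) * (q t - q s) := by linarith [hV s hs t ht, hV t ht s hs]
    exact sub_nonneg.1 (nonneg_of_mul_nonneg_right h (sub_pos.2 hlt))

lemma abs_increment_sub_le (hU : IsSubgradientOn q U K) (hV : IsSubgradientOn q V K) {s t : ℝ}
    (hs : s ∈ K) (ht : t ∈ K) :
    |(V t - U t) - (V s - U s)| ≤ (t - s) * (q t - q s) := by
  rw [abs_le]
  constructor <;> linarith [hU s hs t ht, hU t ht s hs, hV s hs t ht, hV t ht s hs]

end IsSubgradientOn

-- Cut `[a, b]` into `N + 1` equal pieces: the bounds over the pieces telescope.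
lemma abs_sub_le_div_of_abs_sub_le_mul_sub {D q : ℝ → ℝ} {a b : ℝ} (hab : a ≤ b)
    (hD : ∀ s ∈ Set.Icc a b, ∀ t ∈ Set.Icc a b, |D t - D s| ≤ (t - s) * (q t - q s)) (N : ℕ) :
    |D a - D b| ≤ (b - a) * (q b - q a) / (N + 1 : ℕ) := by
  have hN : (0 : ℝ) < (N + 1 : ℕ) := by positivity
  let x (k : ℕ) : ℝ := a + k * ((b - a) / (N + 1 : ℕ))
  have hx0 : x 0 = a := by simp [x]
  have hxN : x (N + 1) = b := by simp only [x]; field_simp; ring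
  have hstep (k : ℕ) : x (k + 1) - x k = (b - a) / (N + 1 : ℕ) := by
    simp only [x]; push_cast; ring
  have hxmono : Monotone x := monotone_nat_of_le_succ fun k => by
    have : 0 ≤ (b - a) / (N + 1 : ℕ) := div_nonneg (sub_nonneg.2 hab) hN.le
    linarith [hstep k]
  have hx {k : ℕ} (hk : k ≤ N + 1) : x k ∈ Set.Icc a b :=
    ⟨hx0 ▸ hxmono k.zero_le, hxN ▸ hxmono hk⟩
  calc |D a - D b| = dist (D (x 0)) (D (x (N + 1))) := by rw [hx0, hxN, Real.dist_eq]
    _ ≤ ∑ k ∈ range (N + 1), (b - a) / (N + 1 : ℕ) * (q (x (k + 1)) - q (x k)) :=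
        dist_le_range_sum_of_dist_le (f := D ∘ x) _ fun {k} hk => by
          rw [dist_comm, Real.dist_eq, ← hstep k]
          exact hD _ (hx hk.le) _ (hx hk)
    _ = (b - a) * (q b - q a) / (N + 1 : ℕ) := by
        rw [← Finset.mul_sum, Finset.sum_range_sub fun k => q (x k), hx0, hxN, div_mul_eq_mul_div]

lemma eq_of_abs_sub_le_mul_sub {D q : ℝ → ℝ} {a b : ℝ} (hab : a ≤ b)
    (hD : ∀ s ∈ Set.Icc a b, ∀ t ∈ Set.Icc a b, |D t - D s| ≤ (t - s) * (q t - q s)) :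
    D a = D b := by
  have hlim : Filter.Tendsto (fun N : ℕ => (b - a) * (q b - q a) / (N + 1 : ℕ)) Filter.atTop
      (nhds 0) :=
    (tendsto_const_div_atTop_nhds_zero_nat _).comp (Filter.tendsto_add_atTop_nat 1)
  have habs : |D a - D b| ≤ 0 :=
    ge_of_tendsto' hlim (abs_sub_le_div_of_abs_sub_le_mul_sub hab hD)
  exact sub_eq_zero.1 (abs_nonpos_iff.1 habs)

lemma isSubgradientOn_primitive {q : ℝ → ℝ} {a b : ℝ} (hq : MonotoneOn q (Set.Icc a b)) :
    IsSubgradientOn q (fun t => ∫ x in a..t, q x) (Set.Icc a b) := by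
  intro s hs t ht
  have hint {u v : ℝ} (hu : u ∈ Set.Icc a b) (hv : v ∈ Set.Icc a b) :
      IntervalIntegrable q volume u v :=
    (hq.mono (Set.uIcc_subset_Icc hu hv)).intervalIntegrable
  have ha : a ∈ Set.Icc a b := ⟨le_rfl, hs.1.trans hs.2⟩
  have hrect : (t - s) * q s ≤ ∫ x in s..t, q x := by
    rcases le_total s t with hst | hts
    · simpa using intervalIntegral.integral_mono_on hst (intervalIntegrable_const (c := q s))
        (hint hs ht) fun x hx => hq hs ⟨hs.1.trans hx.1, hx.2.trans ht.2⟩ hx.1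
    · have hle : ∫ x in t..s, q x ≤ (s - t) * q s := by
        simpa using intervalIntegral.integral_mono_on hts (hint ht hs)
          (intervalIntegrable_const (c := q s))
          fun x hx => hq ⟨ht.1.trans hx.1, hx.2.trans hs.2⟩ hs hx.2
      rw [intervalIntegral.integral_symm]
      linarith
  linarith [intervalIntegral.integral_add_adjacent_intervals (hint ha hs) (hint hs ht)]

lemma IsSubgradientOn.eq_add_integral {q V : ℝ → ℝ} {a b : ℝ}
    (hV : IsSubgradientOn q V (Set.Icc a b)) {t : ℝ} (ht : t ∈ Set.Icc a b) :
    V t = V a + ∫ s in a..t, q s := by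
  have hsub : Set.Icc a t ⊆ Set.Icc a b := Set.Icc_subset_Icc_right ht.2
  have hU := isSubgradientOn_primitive hV.monotoneOn
  have h := eq_of_abs_sub_le_mul_sub (D := fun t => V t - ∫ s in a..t, q s) ht.1
    fun u hu v hv => hU.abs_increment_sub_le hV (hsub hu) (hsub hv)
  simp only [intervalIntegral.integral_same, sub_zero] at h
  linarith

end Subgradient

section TypeDistribution

/-- `g` is the density of a user's type: positive on `[a, b]` and of total mass one there. -/
structure IsTypeDensity (a b : ℝ) (g : ℝ → ℝ) : Prop where
  pos : ∀ t ∈ Set.Icc a b, 0 < g t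
  integral_eq_one : ∫ t in Set.Icc a b, g t = 1

/-- The law of a type with density `g` on `[a, b]`. -/
def typeLaw (a b : ℝ) (g : ℝ → ℝ) : Measure ℝ :=
  (volume.restrict (Set.Icc a b)).withDensity fun t => ENNReal.ofReal (g t)

/-- The inverse hazard rate `(1 - G) / g` of the density `g` with distribution function `G`; the
virtual valuation is the type minus its inverse hazard rate. -/
def inverseHazardRate (a : ℝ) (g : ℝ → ℝ) (t : ℝ) : ℝ :=
  (1 - ∫ s in a..t, g s) / g t

variable {a b : ℝ} {g : ℝ → ℝ}

lemma typeLaw_absolutelyContinuous : typeLaw a b g ≪ volume.restrict (Set.Icc a b) :=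
  withDensity_absolutelyContinuous _ _

lemma ae_typeLaw_mem_Icc : ∀ᵐ t ∂typeLaw a b g, t ∈ Set.Icc a b :=
  typeLaw_absolutelyContinuous.ae_le (ae_restrict_mem measurableSet_Icc)

lemma integrable_mul_typeLaw_of_monotoneOn {q h : ℝ → ℝ} (hq : MonotoneOn q (Set.Icc a b))
    (hh : Integrable h (typeLaw a b g)) : Integrable (fun t => q t * h t) (typeLaw a b g) := by
  have hqmeas : AEMeasurable q (typeLaw a b g) :=
    (aemeasurable_restrict_of_monotoneOn measurableSet_Icc hq).mono_ac typeLaw_absolutelyContinuous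
  refine hh.bdd_mul (c := max |q a| |q b|) hqmeas.aestronglyMeasurable ?_
  filter_upwards [ae_typeLaw_mem_Icc] with t ht
  have hab := ht.1.trans ht.2
  exact abs_le_max_abs_abs (hq (Set.left_mem_Icc.2 hab) ht ht.1)
    (hq ht (Set.right_mem_Icc.2 hab) ht.2)

namespace IsTypeDensity

lemma integrableOn (hg : IsTypeDensity a b g) : IntegrableOn g (Set.Icc a b) := by
  by_contra h
  exact one_ne_zero (hg.integral_eq_one.symm.trans (integral_undef h))

lemma ae_nonneg (hg : IsTypeDensity a b g) : 0 ≤ᵐ[volume.restrict (Set.Icc a b)] g := by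
  filter_upwards [ae_restrict_mem measurableSet_Icc] with t ht using (hg.pos t ht).le

lemma left_mem_Icc (hg : IsTypeDensity a b g) : a ∈ Set.Icc a b := by
  refine Set.left_mem_Icc.2 (not_lt.1 fun hba => ?_)
  simpa [Set.Icc_eq_empty hba.not_ge] using hg.integral_eq_one

lemma isProbabilityMeasure (hg : IsTypeDensity a b g) :
    IsProbabilityMeasure (typeLaw a b g) where
  measure_univ := by
    rw [typeLaw, withDensity_ofReal_apply hg.integrableOn hg.ae_nonneg MeasurableSet.univ,
      Measure.restrict_univ, hg.integral_eq_one, ENNReal.ofReal_one]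

lemma integral_typeLaw (hg : IsTypeDensity a b g) (G : ℝ → ℝ) :
    ∫ t, G t ∂typeLaw a b g = ∫ t in Set.Icc a b, G t * g t :=
  integral_withDensity_ofReal hg.integrableOn.aemeasurable hg.ae_nonneg G

lemma integrable_typeLaw_iff (hg : IsTypeDensity a b g) {G : ℝ → ℝ} :
    Integrable G (typeLaw a b g) ↔ IntegrableOn (fun t => G t * g t) (Set.Icc a b) :=
  integrable_withDensity_ofReal_iff hg.integrableOn.aemeasurable hg.ae_nonneg

lemma integrable_of_continuousOn (hg : IsTypeDensity a b g) {G : ℝ → ℝ}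
    (hG : ContinuousOn G (Set.Icc a b)) : Integrable G (typeLaw a b g) :=
  hg.integrable_typeLaw_iff.2 (hg.integrableOn.continuousOn_mul hG isCompact_Icc)

lemma inverseHazardRate_mul (hg : IsTypeDensity a b g) {t : ℝ} (ht : t ∈ Set.Icc a b) :
    inverseHazardRate a g t * g t = 1 - ∫ s in a..t, g s :=
  div_mul_cancel₀ _ (hg.pos t ht).ne'

lemma integrable_inverseHazardRate (hg : IsTypeDensity a b g) :
    Integrable (inverseHazardRate a g) (typeLaw a b g) := by
  have hsurvival : ContinuousOn (fun t => 1 - ∫ s in a..t, g s) (Set.Icc a b) :=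
    continuousOn_const.sub (continuousOn_intervalIntegral_right hg.integrableOn)
  exact hg.integrable_typeLaw_iff.2 <| (hsurvival.integrableOn_compact isCompact_Icc).congr_fun
    (fun t ht => (hg.inverseHazardRate_mul ht).symm) measurableSet_Icc

lemma integral_tail_eq (hg : IsTypeDensity a b g) {t : ℝ} (ht : t ∈ Set.Icc a b) :
    ∫ s in t..b, g s = 1 - ∫ s in a..t, g s := by
  have htotal : ∫ s in a..b, g s = 1 := by
    rw [intervalIntegral.integral_of_le (ht.1.trans ht.2), ← integral_Icc_eq_integral_Ioc,
      hg.integral_eq_one]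
  have hint {u v : ℝ} (hu : a ≤ u) (huv : u ≤ v) (hv : v ≤ b) : IntervalIntegrable g volume u v :=
    (intervalIntegrable_iff_integrableOn_Icc_of_le huv).2
      (hg.integrableOn.mono_set (Set.Icc_subset_Icc hu hv))
  linarith [intervalIntegral.integral_add_adjacent_intervals (hint le_rfl ht.1 ht.2)
    (hint ht.1 ht.2 le_rfl)]

lemma integral_primitive_typeLaw (hg : IsTypeDensity a b g) {q : ℝ → ℝ}
    (hq : IntegrableOn q (Set.Icc a b)) :
    ∫ t, (∫ s in a..t, q s) ∂typeLaw a b g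
      = ∫ t, q t * inverseHazardRate a g t ∂typeLaw a b g := by
  rw [hg.integral_typeLaw, hg.integral_typeLaw, setIntegral_primitive_mul hq hg.integrableOn]
  refine setIntegral_congr_fun measurableSet_Icc fun t ht => ?_
  simp only [mul_assoc, hg.inverseHazardRate_mul ht, hg.integral_tail_eq ht]

lemma integral_payment_eq_integral_surplus_sub (hg : IsTypeDensity a b g) {q V : ℝ → ℝ}
    (hV : IsSubgradientOn q V (Set.Icc a b)) :
    ∫ t, (q t * t - V t) ∂typeLaw a b g
      = ∫ t, q t * (t - inverseHazardRate a g t) ∂typeLaw a b g - V a := by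
  have := hg.isProbabilityMeasure
  have hq := hV.monotoneOn
  have hqint : IntegrableOn q (Set.Icc a b) := hq.integrableOn_isCompact isCompact_Icc
  have htype : Integrable (fun t => q t * t) (typeLaw a b g) :=
    integrable_mul_typeLaw_of_monotoneOn hq (hg.integrable_of_continuousOn continuousOn_id)
  have hhazard := integrable_mul_typeLaw_of_monotoneOn hq hg.integrable_inverseHazardRate
  have hprim := hg.integrable_of_continuousOn (continuousOn_intervalIntegral_right hqint)
  have hutility : Integrable (fun t => V a + ∫ s in a..t, q s) (typeLaw a b g) :=
    (integrable_const _).add hprim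
  have henvelope : ∫ t, (q t * t - V t) ∂typeLaw a b g
      = ∫ t, (q t * t - (V a + ∫ s in a..t, q s)) ∂typeLaw a b g := by
    refine integral_congr_ae ?_
    filter_upwards [ae_typeLaw_mem_Icc] with t ht
    rw [hV.eq_add_integral ht]
  simp only [mul_sub]
  rw [henvelope, integral_sub htype hutility,
    integral_add (integrable_const _) hprim, integral_sub htype hhazard,
    hg.integral_primitive_typeLaw hqint, integral_const, probReal_univ, one_smul]
  ring

end IsTypeDensity

end TypeDistribution

section WinnerTakesAll

variable {ι : Type*} [DecidableEq ι]

/-- The allocation `q` gives everything to one maximizer of the scores `w` if some score is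
positive, and nothing otherwise. -/
def IsWinnerTakesAll (w q : ι → ℝ) : Prop :=
  (∃ k, 0 < w k ∧ (∀ i, w i ≤ w k) ∧ q = Pi.single k 1) ∨ ((∀ i, w i ≤ 0) ∧ q = 0)

variable {w w' q q' : ι → ℝ}

lemma isWinnerTakesAll_of_pos_of_nonpos
    (hpos : (∃ i, 0 < w i) → ∃ k, (∀ i, w i ≤ w k) ∧ q k = 1 ∧ ∀ i, i ≠ k → q i = 0)
    (hnonpos : (∀ i, w i ≤ 0) → ∀ i, q i = 0) : IsWinnerTakesAll w q := by
  by_cases h : ∃ i, 0 < w i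
  · obtain ⟨k, hmax, hk, hne⟩ := hpos h
    obtain ⟨i, hi⟩ := h
    refine .inl ⟨k, hi.trans_le (hmax i), hmax, funext fun l => ?_⟩
    rcases eq_or_ne l k with rfl | hl
    · rw [hk, Pi.single_eq_same]
    · rw [hne l hl, Pi.single_eq_of_ne hl]
  · push Not at h
    exact .inr ⟨h, funext (hnonpos h)⟩

namespace IsWinnerTakesAll

lemma nonneg (hq : IsWinnerTakesAll w q) (i : ι) : 0 ≤ q i := by
  rcases hq with ⟨k, -, -, rfl⟩ | ⟨-, rfl⟩
  · rw [Pi.single_apply]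
    split_ifs <;> norm_num
  · rfl

lemma sum_le_one (hq : IsWinnerTakesAll w q) (A : Finset ι) : ∑ i ∈ A, q i ≤ 1 := by
  rcases hq with ⟨k, -, -, rfl⟩ | ⟨-, rfl⟩
  · rw [Finset.sum_pi_single']
    split_ifs <;> norm_num
  · simp

-- A winner inside `A` still beats every index outside `A` once the scores in `A` have risen.
lemma sum_le_sum (hq : IsWinnerTakesAll w q) (hq' : IsWinnerTakesAll w' q') {A : Finset ι}
    (hin : ∀ i ∈ A, w i < w' i) (hout : ∀ i ∉ A, w' i ≤ w i) :
    ∑ i ∈ A, q i ≤ ∑ i ∈ A, q' i := by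
  have hsum' : 0 ≤ ∑ i ∈ A, q' i := Finset.sum_nonneg fun i _ => hq'.nonneg i
  rcases hq with ⟨k, hk, hmax, rfl⟩ | ⟨-, rfl⟩
  swap
  · simpa using hsum'
  by_cases hkA : k ∈ A
  swap
  · simpa [hkA] using hsum'
  rcases hq' with ⟨k', -, hmax', rfl⟩ | ⟨hnonpos, -⟩
  · have hk'A : k' ∈ A := by
      by_contra hk'A
      linarith [hin k hkA, hmax' k, hout k' hk'A, hmax k']
    simp [hkA, hk'A]
  · linarith [hin k hkA, hnonpos k]

lemma sum_mul_le_sum_mul [Fintype ι] (hq : IsWinnerTakesAll w q) (hq'0 : ∀ i, 0 ≤ q' i)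
    (hq'1 : ∑ i, q' i ≤ 1) : ∑ i, q' i * w i ≤ ∑ i, q i * w i := by
  rcases hq with ⟨k, hk, hmax, rfl⟩ | ⟨hnonpos, rfl⟩
  · calc ∑ i, q' i * w i ≤ ∑ i, q' i * w k :=
          Finset.sum_le_sum fun i _ => mul_le_mul_of_nonneg_left (hmax i) (hq'0 i)
      _ = (∑ i, q' i) * w k := (Finset.sum_mul ..).symm
      _ ≤ w k := mul_le_of_le_one_left hk.le hq'1
      _ = ∑ i, (Pi.single k 1 : ι → ℝ) i * w i := by simp [Pi.single_apply]
  · simpa using Finset.sum_nonpos fun i _ => mul_nonpos_of_nonneg_of_nonpos (hq'0 i) (hnonpos i)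

end IsWinnerTakesAll

end WinnerTakesAll

section Auction

variable {n m : ℕ} {θ hval : ℝ} {r : Fin m → ℝ} {a abar : Fin n → ℝ} {f : Fin n → ℝ → ℝ}
  {S : Fin n → Finset (Fin m)} {p : (Fin n → ℝ) → Fin m → ℝ} {x : (Fin n → ℝ) → Fin n → ℝ}

/-- The joint law of the independent types; integrals over `Tspace` against `jointDens` are
integrals against it. -/
def profileLaw (a abar : Fin n → ℝ) (f : Fin n → ℝ → ℝ) : Measure (Fin n → ℝ) :=
  Measure.pi fun j => typeLaw (a j) (abar j) (f j)

lemma isProbabilityMeasure_profileLaw (hf : ∀ j, IsTypeDensity (a j) (abar j) (f j)) :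
    IsProbabilityMeasure (profileLaw a abar f) := by
  have := fun j => (hf j).isProbabilityMeasure
  unfold profileLaw
  infer_instance

lemma volume_restrict_Tspace :
    volume.restrict (Tspace a abar)
      = Measure.pi fun j => volume.restrict (Set.Icc (a j) (abar j)) := by
  rw [Tspace, volume_pi, Measure.restrict_pi_pi]

lemma integrableOn_jointDens (hf : ∀ j, IsTypeDensity (a j) (abar j) (f j)) :
    IntegrableOn (jointDens f) (Tspace a abar) := by
  rw [IntegrableOn, volume_restrict_Tspace]
  exact Integrable.fintype_prod_dep fun j => (hf j).integrableOn

lemma jointDens_ae_nonneg (hf : ∀ j, IsTypeDensity (a j) (abar j) (f j)) :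
    0 ≤ᵐ[volume.restrict (Tspace a abar)] jointDens f := by
  rw [volume_restrict_Tspace]
  exact ae_pi_prod_nonneg fun j => (hf j).ae_nonneg

lemma profileLaw_eq_withDensity (hf : ∀ j, IsTypeDensity (a j) (abar j) (f j)) :
    profileLaw a abar f = (volume.restrict (Tspace a abar)).withDensity
      fun t => ENNReal.ofReal (jointDens f t) := by
  rw [volume_restrict_Tspace]
  exact pi_withDensity_ofReal (fun j => (hf j).integrableOn) fun j => (hf j).ae_nonneg

lemma integral_profileLaw (hf : ∀ j, IsTypeDensity (a j) (abar j) (f j)) (G : (Fin n → ℝ) → ℝ) :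
    ∫ t, G t ∂profileLaw a abar f = ∫ t in Tspace a abar, G t * jointDens f t := by
  rw [profileLaw_eq_withDensity hf]
  exact integral_withDensity_ofReal (integrableOn_jointDens hf).aemeasurable
    (jointDens_ae_nonneg hf) G

lemma integrable_profileLaw_iff (hf : ∀ j, IsTypeDensity (a j) (abar j) (f j))
    {G : (Fin n → ℝ) → ℝ} :
    Integrable G (profileLaw a abar f)
      ↔ IntegrableOn (fun t => G t * jointDens f t) (Tspace a abar) := by
  rw [profileLaw_eq_withDensity hf]
  exact integrable_withDensity_ofReal_iff (integrableOn_jointDens hf).aemeasurable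
    (jointDens_ae_nonneg hf)

lemma ae_profileLaw_mem_Tspace (hf : ∀ j, IsTypeDensity (a j) (abar j) (f j)) :
    ∀ᵐ t ∂profileLaw a abar f, t ∈ Tspace a abar := by
  rw [profileLaw_eq_withDensity hf]
  exact (withDensity_absolutelyContinuous _ _).ae_le
    (ae_restrict_mem (MeasurableSet.univ_pi fun _ => measurableSet_Icc))

lemma integrable_profileLaw_comp_eval (hf : ∀ j, IsTypeDensity (a j) (abar j) (f j)) {j : Fin n}
    {G : ℝ → ℝ} (hG : Integrable G (typeLaw (a j) (abar j) (f j))) :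
    Integrable (fun t => G (t j)) (profileLaw a abar f) := by
  have := fun j => (hf j).isProbabilityMeasure
  exact integrable_comp_eval (μ := fun j => typeLaw (a j) (abar j) (f j)) hG

lemma integral_typeLaw_update (hf : ∀ j, IsTypeDensity (a j) (abar j) (f j)) (j : Fin n)
    {G : (Fin n → ℝ) → ℝ} (hG : Integrable G (profileLaw a abar f)) :
    ∫ τ, ∫ t, G (Function.update t j τ) ∂profileLaw a abar f ∂typeLaw (a j) (abar j) (f j)
      = ∫ t, G t ∂profileLaw a abar f := by
  have := fun j => (hf j).isProbabilityMeasure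
  exact integral_integral_update j hG

lemma update_mem_Tspace {t : Fin n → ℝ} (ht : t ∈ Tspace a abar) {j : Fin n} {s : ℝ}
    (hs : s ∈ Set.Icc (a j) (abar j)) : Function.update t j s ∈ Tspace a abar :=
  (Set.update_mem_pi_iff_of_mem ht).2 fun _ => hs

/-- Fraction feasibility (FF): on the type space, `p` is a subprobability vector. -/
def FracFeasible (a abar : Fin n → ℝ) (p : (Fin n → ℝ) → Fin m → ℝ) : Prop :=
  ∀ t ∈ Tspace a abar, (∀ i, 0 ≤ p t i) ∧ ∑ i, p t i ≤ 1

namespace FracFeasible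

lemma sum_mem_Icc (hp : FracFeasible a abar p) {t : Fin n → ℝ} (ht : t ∈ Tspace a abar)
    (A : Finset (Fin m)) : ∑ i ∈ A, p t i ∈ Set.Icc 0 1 :=
  ⟨Finset.sum_nonneg fun i _ => (hp t ht).1 i,
    (Finset.sum_le_univ_sum_of_nonneg (hp t ht).1).trans (hp t ht).2⟩

lemma norm_sum_le_one (hp : FracFeasible a abar p) {t : Fin n → ℝ} (ht : t ∈ Tspace a abar)
    (A : Finset (Fin m)) : ‖∑ i ∈ A, p t i‖ ≤ 1 := by
  obtain ⟨h0, h1⟩ := hp.sum_mem_Icc ht A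
  rwa [Real.norm_of_nonneg h0]

lemma integrable_mul_sum_comp (hp : FracFeasible a abar p) (hpm : Measurable p)
    {Ω : Type*} [MeasurableSpace Ω] {μ : Measure Ω} {φ : Ω → Fin n → ℝ} (hφ : Measurable φ)
    (hmem : ∀ᵐ ω ∂μ, φ ω ∈ Tspace a abar) {G : Ω → ℝ} (hG : Integrable G μ)
    (A : Finset (Fin m)) : Integrable (fun ω => G ω * ∑ i ∈ A, p (φ ω) i) μ := by
  refine hG.mul_bdd (c := 1) (Measurable.aestronglyMeasurable ?_) ?_
  · fun_prop
  · filter_upwards [hmem] with ω hω using hp.norm_sum_le_one hω A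

lemma integrable_sum_comp (hp : FracFeasible a abar p) (hpm : Measurable p)
    {Ω : Type*} [MeasurableSpace Ω] {μ : Measure Ω} [IsFiniteMeasure μ] {φ : Ω → Fin n → ℝ}
    (hφ : Measurable φ) (hmem : ∀ᵐ ω ∂μ, φ ω ∈ Tspace a abar) (A : Finset (Fin m)) :
    Integrable (fun ω => ∑ i ∈ A, p (φ ω) i) μ := by
  simpa using hp.integrable_mul_sum_comp hpm hφ hmem (integrable_const 1) A

end FracFeasible

lemma interimAlloc_eq_integral_profileLaw (hf : ∀ j, IsTypeDensity (a j) (abar j) (f j))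
    (S : Fin n → Finset (Fin m)) (p : (Fin n → ℝ) → Fin m → ℝ) (j : Fin n) (τ : ℝ) :
    interimAlloc a abar f S p j τ
      = ∫ t, ∑ i ∈ S j, p (Function.update t j τ) i ∂profileLaw a abar f :=
  (integral_profileLaw hf _).symm

lemma interimPay_eq_integral_profileLaw (hf : ∀ j, IsTypeDensity (a j) (abar j) (f j))
    (x : (Fin n → ℝ) → Fin n → ℝ) (j : Fin n) (τ : ℝ) :
    interimPay a abar f x j τ = ∫ t, x (Function.update t j τ) j ∂profileLaw a abar f :=
  (integral_profileLaw hf _).symm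

lemma interimAlloc_nonneg (hf : ∀ j, IsTypeDensity (a j) (abar j) (f j))
    (hp : FracFeasible a abar p) {j : Fin n} {τ : ℝ} (hτ : τ ∈ Set.Icc (a j) (abar j)) :
    0 ≤ interimAlloc a abar f S p j τ := by
  rw [interimAlloc_eq_integral_profileLaw hf]
  refine integral_nonneg_of_ae ?_
  filter_upwards [ae_profileLaw_mem_Tspace hf] with t ht
    using (hp.sum_mem_Icc (update_mem_Tspace ht hτ) (S j)).1

lemma ic_iff_isSubgradientOn :
    IC θ a abar f S p x ↔ ∀ j, IsSubgradientOn (fun τ => θ * interimAlloc a abar f S p j τ)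
      (vtld θ a abar f S p x j) (Set.Icc (a j) (abar j)) := by
  refine forall_congr' fun j => forall₂_congr fun τ _ => forall₂_congr fun t _ => ?_
  have hdeviate : θ * t * interimAlloc a abar f S p j τ - interimPay a abar f x j τ
      = vtld θ a abar f S p x j τ + (t - τ) * (θ * interimAlloc a abar f S p j τ) := by
    rw [vtld]
    ring
  rw [hdeviate]

lemma xstar_update (t : Fin n → ℝ) (j : Fin n) (τ : ℝ) :
    xstar θ a S p (Function.update t j τ) j
      = θ * τ * (∑ i ∈ S j, p (Function.update t j τ) i)
        - θ * ∫ s in a j..τ, ∑ i ∈ S j, p (Function.update t j s) i := by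
  simp only [xstar, Function.update_self, Function.update_idem]

lemma integrable_prod_sum_update (hf : ∀ j, IsTypeDensity (a j) (abar j) (f j))
    (hp : FracFeasible a abar p) (hpm : Measurable p) (j : Fin n) (A : Finset (Fin m)) :
    Integrable (fun z : (Fin n → ℝ) × ℝ => ∑ i ∈ A, p (Function.update z.1 j z.2) i)
      ((profileLaw a abar f).prod (volume.restrict (Set.Icc (a j) (abar j)))) := by
  have := isProbabilityMeasure_profileLaw hf
  refine hp.integrable_sum_comp hpm measurable_update' ?_ A
  filter_upwards [Measure.quasiMeasurePreserving_fst.ae (ae_profileLaw_mem_Tspace hf),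
    Measure.quasiMeasurePreserving_snd.ae (ae_restrict_mem measurableSet_Icc)] with z hz₁ hz₂
    using update_mem_Tspace hz₁ hz₂

lemma integral_primitive_sum_update (hf : ∀ j, IsTypeDensity (a j) (abar j) (f j))
    (hp : FracFeasible a abar p) (hpm : Measurable p) {j : Fin n} {τ : ℝ}
    (hτ : τ ∈ Set.Icc (a j) (abar j)) :
    ∫ t, (∫ s in a j..τ, ∑ i ∈ S j, p (Function.update t j s) i) ∂profileLaw a abar f
      = ∫ s in a j..τ, interimAlloc a abar f S p j s := by
  have := isProbabilityMeasure_profileLaw hf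
  have hsub : Set.uIoc (a j) τ ⊆ Set.Icc (a j) (abar j) := by
    rw [Set.uIoc_of_le hτ.1]
    exact Set.Ioc_subset_Icc_self.trans (Set.Icc_subset_Icc_right hτ.2)
  have hint := (integrable_prod_sum_update hf hp hpm j (S j)).mono_measure
    (Measure.prod_mono le_rfl (Measure.restrict_mono hsub le_rfl))
  simp only [interimAlloc_eq_integral_profileLaw hf]
  exact (intervalIntegral_integral_swap
    (f := fun s t => ∑ i ∈ S j, p (Function.update t j s) i) hint.swap).symm

lemma vtld_xstar (hf : ∀ j, IsTypeDensity (a j) (abar j) (f j))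
    (hp : FracFeasible a abar p) (hpm : Measurable p) {j : Fin n} {τ : ℝ}
    (hτ : τ ∈ Set.Icc (a j) (abar j)) :
    vtld θ a abar f S p (xstar θ a S p) j τ
      = ∫ s in a j..τ, θ * interimAlloc a abar f S p j s := by
  have := isProbabilityMeasure_profileLaw hf
  have hshare : Integrable (fun t => ∑ i ∈ S j, p (Function.update t j τ) i)
      (profileLaw a abar f) := by
    refine hp.integrable_sum_comp hpm measurable_update_left ?_ (S j)
    filter_upwards [ae_profileLaw_mem_Tspace hf] with t ht using update_mem_Tspace ht hτ
  have hprim := integrable_intervalIntegral_of_mem_Icc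
    (integrable_prod_sum_update hf hp hpm j (S j)) (measurable_const (a := τ))
    (.of_forall fun _ => hτ)
  rw [vtld, interimPay_eq_integral_profileLaw hf]
  simp only [xstar_update]
  rw [integral_sub (hshare.const_mul _) (hprim.const_mul _), integral_const_mul,
    integral_const_mul, integral_primitive_sum_update hf hp hpm hτ,
    ← interimAlloc_eq_integral_profileLaw hf, intervalIntegral.integral_const_mul, sub_sub_cancel]

lemma integrable_xstar (hf : ∀ j, IsTypeDensity (a j) (abar j) (f j))
    (hp : FracFeasible a abar p) (hpm : Measurable p) (j : Fin n) :
    Integrable (fun t => xstar θ a S p t j) (profileLaw a abar f) := by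
  have := isProbabilityMeasure_profileLaw hf
  have hmem := ae_profileLaw_mem_Tspace hf
  have htype : Integrable (fun t : Fin n → ℝ => t j) (profileLaw a abar f) :=
    integrable_profileLaw_comp_eval hf ((hf j).integrable_of_continuousOn continuousOn_id)
  have hshare := hp.integrable_mul_sum_comp hpm measurable_id hmem (htype.const_mul θ) (S j)
  have hprim := integrable_intervalIntegral_of_mem_Icc
    (integrable_prod_sum_update hf hp hpm j (S j)) (measurable_pi_apply j)
    (hmem.mono fun t ht => ht j trivial)
  exact hshare.sub (hprim.const_mul θ)

lemma integrable_virtVal (hf : ∀ j, IsTypeDensity (a j) (abar j) (f j)) (j : Fin n) :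
    Integrable (fun t => virtVal a f j (t j)) (profileLaw a abar f) :=
  integrable_profileLaw_comp_eval hf
    (((hf j).integrable_of_continuousOn continuousOn_id).sub (hf j).integrable_inverseHazardRate)

lemma integrable_virtWelfare (hf : ∀ j, IsTypeDensity (a j) (abar j) (f j)) (i : Fin m) :
    Integrable (virtWelfare θ hval r S (virtVal a f) i) (profileLaw a abar f) := by
  have := isProbabilityMeasure_profileLaw hf
  exact (integrable_finsetSum _ fun j _ => ((integrable_virtVal hf j).const_mul θ).sub
    (integrable_const hval)).sub (integrable_const (r i))

lemma integrable_virtualSurplus (hf : ∀ j, IsTypeDensity (a j) (abar j) (f j))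
    (hp : FracFeasible a abar p) (hpm : Measurable p) (j : Fin n) :
    Integrable (fun t => θ * virtVal a f j (t j) * ∑ i ∈ S j, p t i) (profileLaw a abar f) :=
  hp.integrable_mul_sum_comp hpm measurable_id (ae_profileLaw_mem_Tspace hf)
    ((integrable_virtVal hf j).const_mul θ) (S j)

lemma integral_payment_eq_integral_surplus_sub_vtld (hf : ∀ j, IsTypeDensity (a j) (abar j) (f j))
    (hp : FracFeasible a abar p) (hpm : Measurable p) {j : Fin n}
    (hx : Integrable (fun t => x t j) (profileLaw a abar f)) (hic : IC θ a abar f S p x) :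
    ∫ t, x t j ∂profileLaw a abar f
      = ∫ t, θ * virtVal a f j (t j) * ∑ i ∈ S j, p t i ∂profileLaw a abar f
        - vtld θ a abar f S p x j (a j) := by
  calc ∫ t, x t j ∂profileLaw a abar f
      = ∫ τ, interimPay a abar f x j τ ∂typeLaw (a j) (abar j) (f j) := by
        simp only [interimPay_eq_integral_profileLaw hf]
        exact (integral_typeLaw_update hf j hx).symm
    _ = ∫ τ, (θ * interimAlloc a abar f S p j τ * τ - vtld θ a abar f S p x j τ)
          ∂typeLaw (a j) (abar j) (f j) := by
        congr 1 with τ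
        rw [vtld]
        ring
    _ = ∫ τ, θ * interimAlloc a abar f S p j τ * virtVal a f j τ ∂typeLaw (a j) (abar j) (f j)
          - vtld θ a abar f S p x j (a j) :=
        (hf j).integral_payment_eq_integral_surplus_sub (ic_iff_isSubgradientOn.1 hic j)
    _ = _ := by
        rw [← integral_typeLaw_update hf j (integrable_virtualSurplus hf hp hpm j)]
        simp only [interimAlloc_eq_integral_profileLaw hf, Function.update_self,
          integral_const_mul, mul_right_comm]

lemma sum_mul_virtWelfare (θ hval : ℝ) (r : Fin m → ℝ) (S : Fin n → Finset (Fin m))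
    (c : Fin n → ℝ → ℝ) (t : Fin n → ℝ) (q : Fin m → ℝ) :
    ∑ i, q i * virtWelfare θ hval r S c i t
      = ∑ j, θ * c j (t j) * ∑ i ∈ S j, q i - ∑ i, q i * r i
        - ∑ i, q i * ((Finset.univ.filter fun j => i ∈ S j).card : ℝ) * hval := by
  have hswap : ∑ j, θ * c j (t j) * ∑ i ∈ S j, q i
      = ∑ i, (∑ j with i ∈ S j, θ * c j (t j)) * q i := by
    simp only [Finset.mul_sum, Finset.sum_mul]
    exact Finset.sum_comm' fun j i => by simp
  rw [hswap, ← Finset.sum_sub_distrib, ← Finset.sum_sub_distrib]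
  refine Finset.sum_congr rfl fun i _ => ?_
  rw [virtWelfare, Finset.sum_sub_distrib, Finset.sum_const, nsmul_eq_mul]
  ring

lemma integrable_sum_mul_virtWelfare (hf : ∀ j, IsTypeDensity (a j) (abar j) (f j))
    (hp : FracFeasible a abar p) (hpm : Measurable p) :
    Integrable (fun t => ∑ i, p t i * virtWelfare θ hval r S (virtVal a f) i t)
      (profileLaw a abar f) := by
  refine integrable_finsetSum _ fun i _ => ?_
  simpa [mul_comm] using hp.integrable_mul_sum_comp hpm measurable_id (ae_profileLaw_mem_Tspace hf)
    (integrable_virtWelfare (θ := θ) (hval := hval) (r := r) (S := S) hf i) {i}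

lemma expRev_eq_integral_virtWelfare_sub_sum_vtld (hf : ∀ j, IsTypeDensity (a j) (abar j) (f j))
    (hp : FracFeasible a abar p) (hpm : Measurable p)
    (hx : ∀ j, Integrable (fun t => x t j) (profileLaw a abar f)) (hic : IC θ a abar f S p x) :
    expRev hval r a abar f S p x
      = ∫ t, ∑ i, p t i * virtWelfare θ hval r S (virtVal a f) i t ∂profileLaw a abar f
        - ∑ j, vtld θ a abar f S p x j (a j) := by
  have hgapint (j : Fin n) :
      Integrable (fun t => x t j - θ * virtVal a f j (t j) * ∑ i ∈ S j, p t i)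
        (profileLaw a abar f) :=
    (hx j).sub (integrable_virtualSurplus hf hp hpm j)
  have hgap (j : Fin n) :
      ∫ t, (x t j - θ * virtVal a f j (t j) * ∑ i ∈ S j, p t i) ∂profileLaw a abar f
        = -vtld θ a abar f S p x j (a j) := by
    rw [integral_sub (hx j) (integrable_virtualSurplus hf hp hpm j),
      integral_payment_eq_integral_surplus_sub_vtld hf hp hpm (hx j) hic, sub_sub_cancel_left]
  calc expRev hval r a abar f S p x
      = ∫ t, (∑ i, p t i * virtWelfare θ hval r S (virtVal a f) i t
          + ∑ j, (x t j - θ * virtVal a f j (t j) * ∑ i ∈ S j, p t i)) ∂profileLaw a abar f := by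
        rw [expRev, ← integral_profileLaw hf]
        congr 1 with t
        rw [sum_mul_virtWelfare, Finset.sum_sub_distrib]
        ring
    _ = _ := by
        rw [integral_add (integrable_sum_mul_virtWelfare hf hp hpm)
            (integrable_finsetSum _ fun j _ => hgapint j),
          integral_finsetSum _ fun j _ => hgapint j]
        simp only [hgap, Finset.sum_neg_distrib, ← sub_eq_add_neg]

lemma virtWelfare_update_sub_virtWelfare_update (c : Fin n → ℝ → ℝ) (i : Fin m)
    (t : Fin n → ℝ) (j : Fin n) (s s' : ℝ) :
    virtWelfare θ hval r S c i (Function.update t j s')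
        - virtWelfare θ hval r S c i (Function.update t j s)
      = if i ∈ S j then θ * (c j s' - c j s) else 0 := by
  have hterm (k : Fin n) : θ * c k (Function.update t j s' k) - hval
        - (θ * c k (Function.update t j s k) - hval)
      = if k = j then θ * (c j s' - c j s) else 0 := by
    split_ifs with hk
    · subst hk
      simp only [Function.update_self]
      ring
    · simp [hk]
  simp only [virtWelfare, sub_sub_sub_cancel_right, ← Finset.sum_sub_distrib, hterm]
  simp

/-- `p` is the allocation of the proposed auction: at each type profile it serves a content of
maximal virtual welfare, provided this is positive. -/
def MaximizesVirtWelfare (θ hval : ℝ) (r : Fin m → ℝ) (a abar : Fin n → ℝ) (f : Fin n → ℝ → ℝ)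
    (S : Fin n → Finset (Fin m)) (p : (Fin n → ℝ) → Fin m → ℝ) : Prop :=
  ∀ t ∈ Tspace a abar, IsWinnerTakesAll (fun i => virtWelfare θ hval r S (virtVal a f) i t) (p t)

namespace MaximizesVirtWelfare

lemma fracFeasible (hwin : MaximizesVirtWelfare θ hval r a abar f S p) : FracFeasible a abar p :=
  fun t ht => ⟨(hwin t ht).nonneg, (hwin t ht).sum_le_one univ⟩

lemma monotoneOn_sum_update (hwin : MaximizesVirtWelfare θ hval r a abar f S p) (hθ : 0 < θ)
    {j : Fin n} (hreg : StrictMonoOn (virtVal a f j) (Set.Icc (a j) (abar j)))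
    {t : Fin n → ℝ} (ht : t ∈ Tspace a abar) :
    MonotoneOn (fun s => ∑ i ∈ S j, p (Function.update t j s) i) (Set.Icc (a j) (abar j)) := by
  intro s hs s' hs' hss'
  rcases hss'.eq_or_lt with rfl | hlt
  · rfl
  have hdiff := virtWelfare_update_sub_virtWelfare_update (θ := θ) (hval := hval) (r := r) (S := S)
    (virtVal a f) (t := t) (j := j) (s := s) (s' := s')
  refine (hwin _ (update_mem_Tspace ht hs)).sum_le_sum (hwin _ (update_mem_Tspace ht hs'))
    (fun i hi => sub_pos.1 ?_) fun i hi => (sub_eq_zero.1 ?_).le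
  · rw [hdiff, if_pos hi]
    exact mul_pos hθ (sub_pos.2 (hreg hs hs' hlt))
  · rw [hdiff, if_neg hi]

lemma monotoneOn_interimAlloc (hwin : MaximizesVirtWelfare θ hval r a abar f S p)
    (hf : ∀ j, IsTypeDensity (a j) (abar j) (f j)) (hθ : 0 < θ) (hpm : Measurable p) {j : Fin n}
    (hreg : StrictMonoOn (virtVal a f j) (Set.Icc (a j) (abar j))) :
    MonotoneOn (interimAlloc a abar f S p j) (Set.Icc (a j) (abar j)) := by
  have := isProbabilityMeasure_profileLaw hf
  have hmem := ae_profileLaw_mem_Tspace hf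
  have hint {s : ℝ} (hs : s ∈ Set.Icc (a j) (abar j)) :
      Integrable (fun t => ∑ i ∈ S j, p (Function.update t j s) i) (profileLaw a abar f) :=
    hwin.fracFeasible.integrable_sum_comp hpm measurable_update_left
      (hmem.mono fun t ht => update_mem_Tspace ht hs) (S j)
  intro s hs s' hs' hss'
  simp only [interimAlloc_eq_integral_profileLaw hf]
  exact integral_mono_ae (hint hs) (hint hs') <|
    hmem.mono fun t ht => hwin.monotoneOn_sum_update hθ hreg ht hs hs' hss'

lemma ic_xstar (hwin : MaximizesVirtWelfare θ hval r a abar f S p)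
    (hf : ∀ j, IsTypeDensity (a j) (abar j) (f j)) (hθ : 0 < θ) (hpm : Measurable p)
    (hreg : ∀ j, StrictMonoOn (virtVal a f j) (Set.Icc (a j) (abar j))) :
    IC θ a abar f S p (xstar θ a S p) := by
  refine ic_iff_isSubgradientOn.2 fun j s hs t ht => ?_
  rw [vtld_xstar hf hwin.fracFeasible hpm hs, vtld_xstar hf hwin.fracFeasible hpm ht]
  exact isSubgradientOn_primitive ((monotone_mul_left_of_nonneg hθ.le).comp_monotoneOn
    (hwin.monotoneOn_interimAlloc hf hθ hpm (hreg j))) s hs t ht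

end MaximizesVirtWelfare

lemma ir_xstar (hf : ∀ j, IsTypeDensity (a j) (abar j) (f j)) (hp : FracFeasible a abar p)
    (hpm : Measurable p) (hθ : 0 ≤ θ) : IR θ a abar f S p (xstar θ a S p) := by
  intro j t ht
  rw [vtld_xstar hf hp hpm ht]
  exact intervalIntegral.integral_nonneg ht.1 fun s hs =>
    mul_nonneg hθ (interimAlloc_nonneg hf hp ⟨hs.1, hs.2.trans ht.2⟩)

lemma expRev_xstar_eq_integral_virtWelfare (hf : ∀ j, IsTypeDensity (a j) (abar j) (f j))
    (hp : FracFeasible a abar p) (hpm : Measurable p) (hic : IC θ a abar f S p (xstar θ a S p)) :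
    expRev hval r a abar f S p (xstar θ a S p)
      = ∫ t, ∑ i, p t i * virtWelfare θ hval r S (virtVal a f) i t ∂profileLaw a abar f := by
  have hlowest (j : Fin n) : vtld θ a abar f S p (xstar θ a S p) j (a j) = 0 := by
    rw [vtld_xstar hf hp hpm (hf j).left_mem_Icc, intervalIntegral.integral_same]
  rw [expRev_eq_integral_virtWelfare_sub_sum_vtld hf hp hpm (integrable_xstar hf hp hpm) hic]
  simp only [hlowest, Finset.sum_const_zero, sub_zero]

lemma expRev_le_integral_virtWelfare (hf : ∀ j, IsTypeDensity (a j) (abar j) (f j))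
    (hp : FracFeasible a abar p) (hpm : Measurable p)
    (hx : ∀ j, Integrable (fun t => x t j) (profileLaw a abar f)) (hic : IC θ a abar f S p x)
    (hir : IR θ a abar f S p x) :
    expRev hval r a abar f S p x
      ≤ ∫ t, ∑ i, p t i * virtWelfare θ hval r S (virtVal a f) i t ∂profileLaw a abar f := by
  rw [expRev_eq_integral_virtWelfare_sub_sum_vtld hf hp hpm hx hic]
  exact sub_le_self _ (Finset.sum_nonneg fun j _ => hir j (a j) (hf j).left_mem_Icc)

lemma MaximizesVirtWelfare.integral_virtWelfare_le {pstar : (Fin n → ℝ) → Fin m → ℝ}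
    (hwin : MaximizesVirtWelfare θ hval r a abar f S pstar)
    (hf : ∀ j, IsTypeDensity (a j) (abar j) (f j)) (hpsm : Measurable pstar)
    (hp : FracFeasible a abar p) (hpm : Measurable p) :
    ∫ t, ∑ i, p t i * virtWelfare θ hval r S (virtVal a f) i t ∂profileLaw a abar f
      ≤ ∫ t, ∑ i, pstar t i * virtWelfare θ hval r S (virtVal a f) i t ∂profileLaw a abar f := by
  refine integral_mono_ae (integrable_sum_mul_virtWelfare hf hp hpm)
    (integrable_sum_mul_virtWelfare hf hwin.fracFeasible hpsm) ?_
  filter_upwards [ae_profileLaw_mem_Tspace hf] with t ht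
    using (hwin t ht).sum_mul_le_sum_mul (hp t ht).1 (hp t ht).2

end Auction

/-- Theorem 1 (revenue optimality of the proposed auction): under regularity,
the mechanism (p*, x*), where p* maximizes the virtual welfare pointwise and
x* is the associated payment rule, satisfies FF, IC and IR, and its expected
revenue dominates that of every measurable, integrable mechanism (p, x)
satisfying FF, IC and IR. -/
theorem stmt_15 {n m : ℕ} (θ hval : ℝ) (hθ : 0 < θ) (hh : 0 ≤ hval)
    (r : Fin m → ℝ) (a abar : Fin n → ℝ) (hab : ∀ j, a j < abar j)
    (f : Fin n → ℝ → ℝ)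
    (hfmeas : ∀ j, Measurable (f j))
    (hfpos : ∀ j, ∀ t ∈ Set.Icc (a j) (abar j), 0 < f j t)
    (hfprob : ∀ j, ∫ t in Set.Icc (a j) (abar j), f j t = 1)
    (S : Fin n → Finset (Fin m))
    -- regularity: each virtual valuation is strictly increasing
    (hreg : ∀ j, StrictMonoOn (virtVal a f j) (Set.Icc (a j) (abar j)))
    (pstar : (Fin n → ℝ) → Fin m → ℝ) (hpsmeas : Measurable pstar)
    (hp1 : ∀ t ∈ Tspace a abar,
        (∃ i, 0 < virtWelfare θ hval r S (virtVal a f) i t) →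
        ∃ k, (∀ i, virtWelfare θ hval r S (virtVal a f) i t
              ≤ virtWelfare θ hval r S (virtVal a f) k t) ∧
          pstar t k = 1 ∧ ∀ i, i ≠ k → pstar t i = 0)
    (hp2 : ∀ t ∈ Tspace a abar,
        (∀ i, virtWelfare θ hval r S (virtVal a f) i t ≤ 0) → ∀ i, pstar t i = 0)
    (hWint : ∀ i, IntegrableOn
        (fun t => virtWelfare θ hval r S (virtVal a f) i t * jointDens f t)
        (Tspace a abar)) :
    -- (p*, x*) is fraction feasible, incentive compatible and individually rational
    (∀ t ∈ Tspace a abar, (∀ i, 0 ≤ pstar t i) ∧ ∑ i, pstar t i ≤ 1) ∧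
    IC θ a abar f S pstar (xstar θ a S pstar) ∧
    IR θ a abar f S pstar (xstar θ a S pstar) ∧
    -- and its expected revenue dominates every feasible IC and IR mechanism
    (∀ (p : (Fin n → ℝ) → Fin m → ℝ) (x : (Fin n → ℝ) → Fin n → ℝ),
      Measurable p → Measurable x →
      (∀ j, IntegrableOn (fun t => x t j * jointDens f t) (Tspace a abar)) →
      (∀ t ∈ Tspace a abar, (∀ i, 0 ≤ p t i) ∧ ∑ i, p t i ≤ 1) →
      IC θ a abar f S p x → IR θ a abar f S p x →
      expRev hval r a abar f S p x
        ≤ expRev hval r a abar f S pstar (xstar θ a S pstar)) := by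
  have hf : ∀ j, IsTypeDensity (a j) (abar j) (f j) := fun j => ⟨hfpos j, hfprob j⟩
  have hwin : MaximizesVirtWelfare θ hval r a abar f S pstar := fun t ht =>
    isWinnerTakesAll_of_pos_of_nonpos (hp1 t ht) (hp2 t ht)
  have hFF := hwin.fracFeasible
  have hIC := hwin.ic_xstar hf hθ hpsmeas hreg
  refine ⟨hFF, hIC, ir_xstar hf hFF hpsmeas hθ.le, fun p x hpmeas _ hxint hp hic hir => ?_⟩
  calc expRev hval r a abar f S p x
      ≤ ∫ t, ∑ i, p t i * virtWelfare θ hval r S (virtVal a f) i t ∂profileLaw a abar f :=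
        expRev_le_integral_virtWelfare hf hp hpmeas
          (fun j => (integrable_profileLaw_iff hf).2 (hxint j)) hic hir
    _ ≤ ∫ t, ∑ i, pstar t i * virtWelfare θ hval r S (virtVal a f) i t ∂profileLaw a abar f :=
        hwin.integral_virtWelfare_le hf hpsmeas hp hpmeas
    _ = expRev hval r a abar f S pstar (xstar θ a S pstar) :=
        (expRev_xstar_eq_integral_virtWelfare hf hFF hpsmeas hIC).symm

end Caching
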